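/- There exist absolute constants c > 0 and α ≥ 0 such that for all finite A, B ⊆ F_p with |A| ≥ |B| ≥ p^{1/2}, one has max{|A+B|/|A|, |AB|/|A|} ≥ c(log|A|)^{−α}·min{ (|B|⁷/(|A|⁵p^{1/2}))^{1/14}, (|B|³p/|A|⁴)^{1/12} }. -/

import Mathlib

open Finset Pointwise

theorem exists_cover_sub {G : Type*} [AddCommGroup G] [DecidableEq G] {X Y : Finset G}
    (hX : X.Nonempty) (hY : Y.Nonempty) :
    ∃ T : Finset G, X ⊆ T - Y ∧ (#T : ℝ) * #Y ≤ #(X + Y) * (1 + Real.log #X) := by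
  induction X using Finset.strongInduction with
  | H X ih =>
  have hY0 : (0 : ℝ) < #Y := by exact_mod_cast hY.card_pos
  have hX0 : (0 : ℝ) < #X := by exact_mod_cast hX.card_pos
  have hYS : (#Y : ℝ) ≤ #(X + Y) := by exact_mod_cast card_le_card_add_left hX
  have hS0 : (0 : ℝ) < #(X + Y) := hY0.trans_le hYS
  obtain ⟨t, -, ht⟩ : ∃ t ∈ X + Y, (#X : ℝ) * #Y ≤ #(X + Y) * #{x ∈ X | t - x ∈ Y} := by
    by_contra! hcon
    have hne : (X + Y).Nonempty := hX.add hY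
    have h1 : ∑ t ∈ X + Y, (#{x ∈ X | t - x ∈ Y} : ℝ) = #X * #Y := by
      have : ∑ t ∈ X + Y, #{x ∈ X | t - x ∈ Y} = ∑ x ∈ X, #{t ∈ X + Y | t - x ∈ Y} :=
        sum_card_bipartiteAbove_eq_sum_card_bipartiteBelow (fun t x ↦ t - x ∈ Y)
      have h2 : ∀ x ∈ X, #{t ∈ X + Y | t - x ∈ Y} = #Y := by
        intro x hx
        have : {t ∈ X + Y | t - x ∈ Y} = Y.image (x + ·) := by
          ext t
          simp only [mem_filter, mem_image]
          constructor
          · rintro ⟨-, h⟩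
            exact ⟨_, h, by abel⟩
          · rintro ⟨y, hy, rfl⟩
            exact ⟨add_mem_add hx hy, by simpa using hy⟩
        rw [this, card_image_of_injective _ (add_right_injective x)]
      rw [sum_congr rfl h2, sum_const, smul_eq_mul] at this
      exact_mod_cast this
    have h3 := sum_lt_sum_of_nonempty hne hcon
    rw [← mul_sum, h1, sum_const, nsmul_eq_mul] at h3
    exact lt_irrefl _ h3
  set K := {x ∈ X | t - x ∈ Y} with hK
  have hKX : K ⊆ X := filter_subset _ _
  have hcard : (#(X \ K) : ℝ) = #X - #K := by
    rw [card_sdiff_of_subset hKX, Nat.cast_sub (card_le_card hKX)]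
  have hcovK : ∀ x ∈ K, x ∈ ({t} : Finset G) - Y := by
    intro x hx
    rw [hK, mem_filter] at hx
    exact mem_sub.2 ⟨t, mem_singleton_self t, _, hx.2, by abel⟩
  obtain hemp | hne := (X \ K).eq_empty_or_nonempty
  · refine ⟨{t}, fun x hx ↦ hcovK x (sdiff_eq_empty_iff_subset.1 hemp hx), ?_⟩
    have : 0 ≤ Real.log #X := Real.log_natCast_nonneg _
    simp only [card_singleton, Nat.cast_one, one_mul]
    nlinarith
  · have hKpos : (0 : ℝ) < #K := by
      have := mul_pos hX0 hY0
      by_contra! h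
      nlinarith
    have hss : X \ K ⊂ X := by
      refine sdiff_ssubset hKX ?_
      exact card_pos.1 (by exact_mod_cast hKpos)
    obtain ⟨T, hT, hTc⟩ := ih _ hss hne
    refine ⟨insert t T, ?_, ?_⟩
    · intro x hx
      by_cases hxK : x ∈ K
      · exact sub_subset_sub_right (singleton_subset_iff.2 (mem_insert_self t T)) (hcovK x hxK)
      · exact sub_subset_sub_right (subset_insert t T) (hT (mem_sdiff.2 ⟨hx, hxK⟩))
    · have hR0 : (0 : ℝ) < #(X \ K) := by exact_mod_cast hne.card_pos
      have hlog : Real.log #(X \ K) ≤ Real.log #X - #K / #X := by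
        have := Real.log_le_sub_one_of_pos (div_pos hR0 hX0)
        rw [Real.log_div hR0.ne' hX0.ne', hcard, sub_div, div_self hX0.ne', ← hcard] at this
        linarith
      have hS : (#(X \ K + Y) : ℝ) ≤ #(X + Y) := by
        exact_mod_cast card_le_card (add_subset_add_right hss.subset)
      have hlog0 : 0 ≤ Real.log #(X \ K) := Real.log_natCast_nonneg _
      have hins : (#(insert t T) : ℝ) ≤ #T + 1 := by exact_mod_cast card_insert_le t T
      have hYK : (#Y : ℝ) ≤ #(X + Y) * (#K / #X) := by
        rw [mul_div_assoc', le_div_iff₀ hX0]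
        linarith
      calc (#(insert t T) : ℝ) * #Y ≤ (#T + 1) * #Y := by gcongr
        _ ≤ #(X \ K + Y) * (1 + Real.log #(X \ K)) + #Y := by linarith
        _ ≤ #(X + Y) * (1 + Real.log #(X \ K)) + #(X + Y) * (#K / #X) := by gcongr
        _ ≤ #(X + Y) * (1 + (Real.log #X - #K / #X)) + #(X + Y) * (#K / #X) := by gcongr
        _ = #(X + Y) * (1 + Real.log #X) := by ring

theorem exists_le_card_mul_level {ι : Type*} (s : Finset ι) (f : ι → ℕ) {M : ℕ} (hM : 1 ≤ M)
    (hf : ∀ i ∈ s, f i ≤ M) :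
    ∃ n, 1 ≤ n ∧ (∑ i ∈ s, (f i : ℝ)) ≤ n * #{i ∈ s | n ≤ f i} * (1 + Real.log M) := by
  have hlog : 0 ≤ Real.log M := Real.log_natCast_nonneg _
  by_contra! hcon
  have h1 : ∑ i ∈ s, (f i : ℝ) = ∑ n ∈ Icc 1 M, (#{i ∈ s | n ≤ f i} : ℝ) := by
    have h := sum_card_bipartiteAbove_eq_sum_card_bipartiteBelow (s := s) (t := Icc 1 M)
      (fun i n ↦ n ≤ f i)
    have h2 : ∀ i ∈ s, #(bipartiteAbove (fun i n ↦ n ≤ f i) (Icc 1 M) i) = f i := by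
      intro i hi
      have : bipartiteAbove (fun i n ↦ n ≤ f i) (Icc 1 M) i = Icc 1 (f i) := by
        ext n
        have := hf i hi
        simp only [bipartiteAbove, mem_filter, mem_Icc]
        omega
      rw [this, Nat.card_Icc, Nat.add_sub_cancel]
    rw [sum_congr rfl h2] at h
    exact_mod_cast h
  set F := ∑ i ∈ s, (f i : ℝ)
  have hne : (Icc 1 M).Nonempty := ⟨1, by simpa using hM⟩
  have h2 : ∀ n ∈ Icc 1 M, (#{i ∈ s | n ≤ f i} : ℝ) * (1 + Real.log M) < F * (n : ℝ)⁻¹ := by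
    intro n hn
    have hn1 := (mem_Icc.1 hn).1
    have hn0 : (0 : ℝ) < n := by exact_mod_cast hn1
    rw [← div_eq_mul_inv, lt_div_iff₀ hn0]
    linarith [hcon n hn1]
  have h3 := sum_lt_sum_of_nonempty hne h2
  rw [← sum_mul, ← h1, ← mul_sum] at h3
  have h4 : ∑ n ∈ Icc 1 M, (n : ℝ)⁻¹ ≤ 1 + Real.log M := by
    have := harmonic_le_one_add_log M
    rw [harmonic_eq_sum_Icc] at this
    push_cast at this
    exact this
  have h5 : 0 ≤ F := sum_nonneg fun i _ ↦ Nat.cast_nonneg _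
  nlinarith

theorem exists_card_add_add_self_le {G : Type*} [AddCommGroup G] [DecidableEq G] {X : Finset G}
    (hX : X.Nonempty) (Y : Finset G) :
    ∃ Z ⊆ X, Z.Nonempty ∧ #(Z + Y + Y) * #X ^ 2 ≤ #(X + Y) ^ 2 * #Z := by
  obtain ⟨Z, hZ, hmin⟩ := exists_min_image (X.powerset.erase ∅)
    (fun U ↦ (#(U + Y) : ℚ) / #U) ⟨X, by simp [hX.ne_empty]⟩
  rw [mem_erase, mem_powerset, ← nonempty_iff_ne_empty] at hZ
  have hcross : ∀ U ⊆ X, #(Z + Y) * #U ≤ #(U + Y) * #Z := by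
    intro U hU
    obtain rfl | hU0 := U.eq_empty_or_nonempty
    · simp
    have h := hmin U (by simp [hU0.ne_empty, hU])
    rw [div_le_div_iff₀ (by exact_mod_cast hZ.1.card_pos) (by exact_mod_cast hU0.card_pos)] at h
    exact_mod_cast h
  refine ⟨Z, hZ.2, hZ.1, ?_⟩
  have h1 := pluennecke_petridis_inequality_add (A := Z) (B := Y) Y
    fun U hU ↦ hcross U (hU.trans hZ.2)
  have h2 := hcross X Subset.rfl
  rw [add_comm Y Z] at h1
  have h3 : #(Z + Y + Y) * #X ^ 2 * #Z ≤ #(X + Y) ^ 2 * #Z * #Z := by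
    calc _ = (#(Z + Y + Y) * #Z) * #X ^ 2 := by ring
      _ ≤ (#(Z + Y) * #(Z + Y)) * #X ^ 2 := by gcongr
      _ = (#(Z + Y) * #X) ^ 2 := by ring
      _ ≤ (#(X + Y) * #Z) ^ 2 := by gcongr
      _ = _ := by ring
  exact Nat.le_of_mul_le_mul_right h3 hZ.1.card_pos

theorem exists_card_add_add_le {G : Type*} [AddCommGroup G] [DecidableEq G] {X : Finset G}
    (hX : X.Nonempty) (Y₁ Y₂ : Finset G) :
    ∃ Z ⊆ X, Z.Nonempty ∧ #(Z + Y₁ + Y₂) * #X ^ 2 ≤ 4 * #(X + Y₁) * #(X + Y₂) * #Z := by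
  obtain rfl | hY₁ := Y₁.eq_empty_or_nonempty
  · exact ⟨X, Subset.rfl, hX, by simp⟩
  obtain rfl | hY₂ := Y₂.eq_empty_or_nonempty
  · exact ⟨X, Subset.rfl, hX, by simp⟩
  set m₁ := #(X + Y₁) with hm₁
  set m₂ := #(X + Y₂) with hm₂
  have hm₁0 : 0 < m₁ := (hX.add hY₁).card_pos
  have hm₂0 : 0 < m₂ := (hX.add hY₂).card_pos
  let e : G → G × ℤ × ℤ := fun x ↦ (x, 0, 0)
  have he : Function.Injective e := fun a b h ↦ congrArg Prod.fst h
  let R : ℕ → Finset ℤ := fun n ↦ (range n).map Nat.castEmbedding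
  have hR : ∀ n, #(R n) = n := by simp [R]
  let W₁ : Finset (G × ℤ × ℤ) := Y₁ ×ˢ (R m₂ ×ˢ {0})
  let W₂ : Finset (G × ℤ × ℤ) := Y₂ ×ˢ (({0} : Finset ℤ) ×ˢ R m₁)
  obtain ⟨Z', hZ'X, hZ'0, hZ'⟩ := exists_card_add_add_self_le (hX.image e) (W₁ ∪ W₂)
  obtain ⟨Z, hZX, rfl⟩ := subset_image_iff.1 hZ'X
  rw [image_nonempty] at hZ'0
  refine ⟨Z, hZX, hZ'0, ?_⟩
  rw [card_image_of_injective _ he, card_image_of_injective _ he] at hZ'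
  have hup : #(X.image e + (W₁ ∪ W₂)) ≤ 2 * m₁ * m₂ := by
    have hsub : X.image e + (W₁ ∪ W₂) ⊆
        (X + Y₁) ×ˢ (R m₂ ×ˢ {0}) ∪ (X + Y₂) ×ˢ (({0} : Finset ℤ) ×ˢ R m₁) := by
      rw [add_subset_iff]
      intro u hu v hv
      obtain ⟨x, hx, rfl⟩ := mem_image.1 hu
      obtain ⟨y, i, j⟩ := v
      simp only [W₁, W₂, mem_union, mem_product, mem_singleton] at hv
      simp only [e, Prod.mk_add_mk, zero_add, mem_union, mem_product, mem_singleton]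
      rcases hv with ⟨h1, h2⟩ | ⟨h1, h2⟩
      · exact Or.inl ⟨add_mem_add hx h1, h2⟩
      · exact Or.inr ⟨add_mem_add hx h1, h2⟩
    refine (card_le_card hsub).trans ((card_union_le _ _).trans ?_)
    simp only [card_product, hR, card_singleton, ← hm₁, ← hm₂]
    apply le_of_eq
    ring
  have hlow : #(Z + Y₁ + Y₂) * (m₁ * m₂) ≤ #(Z.image e + (W₁ ∪ W₂) + (W₁ ∪ W₂)) := by
    have hsub : (Z + Y₁ + Y₂) ×ˢ (R m₂ ×ˢ R m₁) ⊆ Z.image e + (W₁ ∪ W₂) + (W₁ ∪ W₂) := by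
      rintro ⟨g, i, j⟩ h
      simp only [mem_product] at h
      obtain ⟨h1, hi, hj⟩ := h
      obtain ⟨u, hu, y₂, hy₂, rfl⟩ := mem_add.1 h1
      obtain ⟨z, hz, y₁, hy₁, rfl⟩ := mem_add.1 hu
      refine mem_add.2 ⟨(z + y₁, i, 0), mem_add.2 ⟨e z, mem_image_of_mem _ hz, (y₁, i, 0), ?_, ?_⟩,
        (y₂, 0, j), ?_, ?_⟩
      · exact mem_union_left _ (by simp [W₁, hy₁, hi])
      · simp [e]
      · exact mem_union_right _ (by simp [W₂, hy₂, hj])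
      · simp
    have := card_le_card hsub
    simp only [card_product, hR] at this
    linarith [mul_comm m₁ m₂]
  have hfin : #(Z + Y₁ + Y₂) * #X ^ 2 * (m₁ * m₂) ≤ 4 * m₁ * m₂ * #Z * (m₁ * m₂) := by
    calc _ = (#(Z + Y₁ + Y₂) * (m₁ * m₂)) * #X ^ 2 := by ring
      _ ≤ #(Z.image e + (W₁ ∪ W₂) + (W₁ ∪ W₂)) * #X ^ 2 := by gcongr
      _ ≤ #(X.image e + (W₁ ∪ W₂)) ^ 2 * #Z := hZ'
      _ ≤ (2 * m₁ * m₂) ^ 2 * #Z := by gcongr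
      _ = _ := by ring
  exact Nat.le_of_mul_le_mul_right hfin (by positivity)

theorem exists_mul_sq_le_card_add_smul {F : Type*} [Field F] [Fintype F] [DecidableEq F]
    (B : Finset F) :
    ∃ r : F, Fintype.card F * #B ^ 2 ≤ #(B + r • B) * (Fintype.card F + #B ^ 2) := by
  obtain rfl | hB := B.eq_empty_or_nonempty
  · exact ⟨0, by simp⟩
  have hB0 := hB.card_pos
  let E : F → Finset ((F × F) × F × F) := fun r ↦
    {x ∈ (B ×ˢ B) ×ˢ B ×ˢ B | x.1.1 + r * x.1.2 = x.2.1 + r * x.2.2}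
  have hCS : ∀ r, (#B ^ 2) ^ 2 ≤ #(B + r • B) * #(E r) := by
    intro r
    let g : F × F → F := fun u ↦ u.1 + r * u.2
    have hmaps : ∀ u ∈ B ×ˢ B, g u ∈ B + r • B := by
      intro u hu
      rw [mem_product] at hu
      exact add_mem_add hu.1 (smul_mem_smul_finset hu.2)
    have h1 : #B ^ 2 = ∑ c ∈ B + r • B, #{u ∈ B ×ˢ B | g u = c} := by
      rw [← card_eq_sum_card_fiberwise hmaps, card_product, sq]
    have h2 : ∑ c ∈ B + r • B, #{u ∈ B ×ˢ B | g u = c} ^ 2 = #(E r) := by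
      rw [card_eq_sum_card_fiberwise (f := fun x ↦ g x.1) (t := B + r • B)]
      · refine sum_congr rfl fun c _ ↦ ?_
        rw [sq, ← card_product]
        congr 1
        ext ⟨u, v⟩
        simp only [E, g, mem_product, mem_filter]
        constructor
        · rintro ⟨⟨h1, h2⟩, h3, h4⟩
          exact ⟨⟨⟨h1, h3⟩, h2.trans h4.symm⟩, h2⟩
        · rintro ⟨⟨⟨h1, h3⟩, h2⟩, h4⟩
          exact ⟨⟨h1, h4⟩, h3, h2.symm.trans h4⟩
      · intro x hx
        simp only [E, coe_filter, Set.mem_ofPred_eq, mem_product (s := B ×ˢ B)] at hx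
        exact hmaps _ hx.1.1
    rw [h1, ← h2]
    exact sq_sum_le_card_mul_sum_sq
  have hsum : ∑ r, #(E r) ≤ Fintype.card F * #B ^ 2 + (#B ^ 2) ^ 2 := by
    have h1 : ∑ r, #(E r) = ∑ x ∈ (B ×ˢ B) ×ˢ B ×ˢ B,
        #{r : F | x.1.1 + r * x.1.2 = x.2.1 + r * x.2.2} :=
      sum_card_bipartiteAbove_eq_sum_card_bipartiteBelow
        (fun (r : F) (x : (F × F) × F × F) ↦ x.1.1 + r * x.1.2 = x.2.1 + r * x.2.2)
    have h2 : ∀ x ∈ (B ×ˢ B) ×ˢ B ×ˢ B, #{r : F | x.1.1 + r * x.1.2 = x.2.1 + r * x.2.2} ≤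
        (if x.1 = x.2 then Fintype.card F else 0) + 1 := by
      rintro ⟨⟨a, b⟩, c, d⟩ -
      dsimp only
      split_ifs with h
      · exact (card_le_univ _).trans (Nat.le_succ _)
      · rw [zero_add, card_le_one]
        intro r hr s hs
        simp only [mem_filter, mem_univ, true_and] at hr hs
        have hbd : b - d ≠ 0 := by
          intro hbd
          rw [sub_eq_zero] at hbd
          subst hbd
          exact h (by rw [add_right_cancel hr])
        refine mul_right_cancel₀ hbd ?_
        linear_combination hr - hs
    rw [h1]
    refine (sum_le_sum h2).trans ?_
    rw [sum_add_distrib, sum_product]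
    refine add_le_add ?_ ?_
    · simp only [sum_ite_eq]
      rw [sum_congr rfl (fun x hx ↦ if_pos hx), sum_const, card_product, smul_eq_mul]
      apply le_of_eq
      ring
    · simp only [sum_const, card_product, smul_eq_mul, mul_one]
      apply le_of_eq
      ring
  have hq : 0 < Fintype.card F := Fintype.card_pos
  obtain ⟨r, -, hr⟩ : ∃ r ∈ (univ : Finset F),
      Fintype.card F * #(E r) ≤ Fintype.card F * #B ^ 2 + (#B ^ 2) ^ 2 := by
    by_contra! hcon
    have := sum_lt_sum_of_nonempty univ_nonempty hcon
    rw [← mul_sum, sum_const, card_univ, smul_eq_mul] at this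
    exact absurd (Nat.lt_of_mul_lt_mul_left this) (not_lt.2 hsum)
  refine ⟨r, ?_⟩
  have h3 : Fintype.card F * #B ^ 2 * #B ^ 2 ≤
      #(B + r • B) * (Fintype.card F + #B ^ 2) * #B ^ 2 := by
    calc _ = Fintype.card F * (#B ^ 2) ^ 2 := by ring
      _ ≤ Fintype.card F * (#(B + r • B) * #(E r)) := by gcongr; exact hCS r
      _ = #(B + r • B) * (Fintype.card F * #(E r)) := by ring
      _ ≤ #(B + r • B) * (Fintype.card F * #B ^ 2 + (#B ^ 2) ^ 2) := by gcongr
      _ = _ := by ring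
  exact Nat.le_of_mul_le_mul_right h3 (by positivity)

theorem exists_sum_card_smul_inter_ge {F : Type*} [Field F] [DecidableEq F] (A : Finset F)
    {B : Finset F} (hB : B.Nonempty) (h0 : 0 ∉ B) :
    ∃ b₀ ∈ B, #A ^ 2 * #B ≤ #(A * B) * ∑ b ∈ B, #(b • A ∩ b₀ • A) := by
  have hsub : ∀ b ∈ B, b • A ⊆ A * B := by
    intro b hb x hx
    obtain ⟨a, ha, rfl⟩ := mem_smul_finset.1 hx
    simpa only [smul_eq_mul, mul_comm b a] using mul_mem_mul ha hb
  have hcard : ∀ b ∈ B, #(b • A) = #A := fun b hb ↦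
    card_smul_finset₀ (ne_of_mem_of_not_mem hb h0) A
  have h1 : ∑ x ∈ A * B, #{b ∈ B | x ∈ b • A} = #B * #A := by
    have h := sum_card_bipartiteAbove_eq_sum_card_bipartiteBelow (s := A * B) (t := B)
      (fun x b ↦ x ∈ b • A)
    have h2 : ∀ b ∈ B, #(bipartiteBelow (fun x b ↦ x ∈ b • A) (A * B) b) = #A := by
      intro b hb
      rw [bipartiteBelow, filter_mem_eq_inter, inter_eq_right.2 (hsub b hb), hcard b hb]
    rw [sum_congr rfl h2, sum_const, smul_eq_mul] at h
    exact h
  have h2 : ∑ x ∈ A * B, #{b ∈ B | x ∈ b • A} ^ 2 = ∑ c ∈ B, ∑ b ∈ B, #(b • A ∩ c • A) := by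
    have h := sum_card_bipartiteAbove_eq_sum_card_bipartiteBelow (s := A * B) (t := B ×ˢ B)
      (fun x u ↦ x ∈ u.2 • A ∧ x ∈ u.1 • A)
    rw [sum_product] at h
    convert h using 1
    · refine sum_congr rfl fun x _ ↦ ?_
      rw [sq, ← card_product]
      congr 1
      ext ⟨u, v⟩
      simp only [bipartiteAbove, mem_product, mem_filter]
      tauto
    · refine sum_congr rfl fun c hc ↦ sum_congr rfl fun b hb ↦ ?_
      congr 1
      ext x
      simp only [bipartiteBelow, mem_inter, mem_filter]
      exact ⟨fun h ↦ ⟨hsub b hb h.1, h⟩, fun h ↦ h.2⟩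
  have hCS := sq_sum_le_card_mul_sum_sq (s := A * B) (f := fun x ↦ #{b ∈ B | x ∈ b • A})
  rw [h1, h2] at hCS
  by_contra! hcon
  have := sum_lt_sum_of_nonempty hB hcon
  rw [← mul_sum, sum_const, smul_eq_mul] at this
  nlinarith

theorem card_add_smul_div_mul_le {F : Type*} [Field F] [DecidableEq F] {A B B₁ : Finset F}
    {b₀ : F} {N : ℕ} (hN : 1 ≤ N) (hB₁ : B₁.Nonempty) (hB₁B : B₁ ⊆ B)
    (h0 : 0 ∉ B) (hinter : ∀ b ∈ B₁, N ≤ #(b • A ∩ b₀ • A))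
    {x y z w : F} (hx : x ∈ B₁) (hy : y ∈ B₁) (hz : z ∈ B₁) (hw : w ∈ B₁) :
    (#(B₁ + ((x - y) / (z - w)) • B₁) : ℝ) * N ^ 4 ≤
      (#(A + B) * (1 + Real.log #B₁)) ^ 4 * #(2 • A - 2 • A) := by
  have hcov : ∀ v ∈ B₁, ∃ T : Finset F, v • B₁ ⊆ T - b₀ • A ∧
      (#T : ℝ) * N ≤ #(A + B) * (1 + Real.log #B₁) := by
    intro v hv
    have hne : (v • A ∩ b₀ • A).Nonempty := card_pos.1 (hN.trans (hinter v hv))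
    obtain ⟨T, hT, hTc⟩ := exists_cover_sub (hB₁.smul_finset (a := v)) hne
    refine ⟨T, hT.trans (sub_subset_sub_left inter_subset_right), ?_⟩
    have hlog : 0 ≤ Real.log #B₁ := Real.log_natCast_nonneg _
    have h1 : #(v • B₁ + v • A ∩ b₀ • A) ≤ #(A + B) := by
      calc _ ≤ #(v • B + v • A) := card_le_card
            (add_subset_add (smul_finset_subset_smul_finset hB₁B) inter_subset_left)
        _ = #(v • (A + B)) := by rw [← smul_add, add_comm]
        _ ≤ #(A + B) := card_smul_finset_le
    rw [card_smul_finset₀ (ne_of_mem_of_not_mem (hB₁B hv) h0)] at hTc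
    calc (#T : ℝ) * N ≤ #T * #(v • A ∩ b₀ • A) := by
          gcongr
          exact hinter v hv
      _ ≤ _ := hTc
      _ ≤ _ := by gcongr
  obtain ⟨Tx, hTx, hTx'⟩ := hcov x hx
  obtain ⟨Ty, hTy, hTy'⟩ := hcov y hy
  obtain ⟨Tz, hTz, hTz'⟩ := hcov z hz
  obtain ⟨Tw, hTw, hTw'⟩ := hcov w hw
  set W := (z • B₁ - w • B₁) + (x • B₁ - y • B₁) with hW
  have h1 : #(B₁ + ((x - y) / (z - w)) • B₁) ≤ #W := by
    by_cases hzw : z - w = 0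
    · rw [hzw, div_zero, zero_smul_finset hB₁, add_zero,
        ← card_smul_finset₀ (ne_of_mem_of_not_mem (hB₁B hz) h0) B₁, hW, sub_eq_add_neg, add_assoc]
      exact card_le_card_add_right (((hB₁.smul_finset).neg).add
        ((hB₁.smul_finset).sub hB₁.smul_finset))
    · rw [← card_smul_finset₀ hzw (B₁ + _), smul_add, smul_smul, mul_div_cancel₀ _ hzw]
      refine card_le_card (add_subset_add ?_ ?_)
      · intro u hu
        obtain ⟨b, hb, rfl⟩ := mem_smul_finset.1 hu
        rw [sub_smul]
        exact sub_mem_sub (smul_mem_smul_finset hb) (smul_mem_smul_finset hb)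
      · intro u hu
        obtain ⟨b, hb, rfl⟩ := mem_smul_finset.1 hu
        rw [sub_smul]
        exact sub_mem_sub (smul_mem_smul_finset hb) (smul_mem_smul_finset hb)
  have h2 : W ⊆ (Tz - Tw + (Tx - Ty)) + b₀ • (2 • A - 2 • A) := by
    refine (add_subset_add (sub_subset_sub hTz hTw) (sub_subset_sub hTx hTy)).trans ?_
    intro u hu
    simp only [mem_add, mem_sub, mem_smul_finset] at hu
    obtain ⟨_, ⟨_, ⟨tz, htz, _, ⟨a, ha, rfl⟩, rfl⟩, _, ⟨tw, htw, _, ⟨b, hb, rfl⟩, rfl⟩, rfl⟩,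
      _, ⟨_, ⟨tx, htx, _, ⟨c, hc, rfl⟩, rfl⟩, _, ⟨ty, hty, _, ⟨d, hd, rfl⟩, rfl⟩, rfl⟩, rfl⟩ := hu
    refine mem_add.2 ⟨tz - tw + (tx - ty),
      add_mem_add (sub_mem_sub htz htw) (sub_mem_sub htx hty), b₀ • ((b + d) - (a + c)),
      smul_mem_smul_finset (sub_mem_sub ?_ ?_), ?_⟩
    · rw [two_nsmul]
      exact add_mem_add hb hd
    · rw [two_nsmul]
      exact add_mem_add ha hc
    · simp only [smul_eq_mul]
      ring
  have h3 : #W ≤ #Tz * #Tw * (#Tx * #Ty) * #(2 • A - 2 • A) := by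
    refine (card_le_card h2).trans (card_add_le.trans (Nat.mul_le_mul ?_ card_smul_finset_le))
    exact card_add_le.trans (Nat.mul_le_mul card_sub_le card_sub_le)
  have h4 : (#(B₁ + ((x - y) / (z - w)) • B₁) : ℝ) ≤
      #Tz * #Tw * (#Tx * #Ty) * #(2 • A - 2 • A) := by exact_mod_cast h1.trans h3
  have hlog : 0 ≤ Real.log #B₁ := Real.log_natCast_nonneg _
  calc (#(B₁ + ((x - y) / (z - w)) • B₁) : ℝ) * N ^ 4
      ≤ #Tz * #Tw * (#Tx * #Ty) * #(2 • A - 2 • A) * N ^ 4 := by gcongr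
    _ = ((#Tz : ℝ) * N) * (#Tw * N) * ((#Tx * N) * (#Ty * N)) * #(2 • A - 2 • A) := by ring
    _ ≤ (#(A + B) * (1 + Real.log #B₁)) * (#(A + B) * (1 + Real.log #B₁)) *
        ((#(A + B) * (1 + Real.log #B₁)) * (#(A + B) * (1 + Real.log #B₁))) *
          #(2 • A - 2 • A) := by gcongr
    _ = _ := by ring

/-- Either the quotient set of `B` contains some `r` making `B + r • B` nearly as large as possible,
or `B` is small and some `r` in its quotient set satisfies `|B| ^ 3 ≤ 4 |B + B| |B + r • B|`. -/
theorem quotient_set_dichotomy {p : ℕ} [Fact p.Prime] {B : Finset (ZMod p)} (hB : B.Nonempty) :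
    ∃ x ∈ B, ∃ y ∈ B, ∃ z ∈ B, ∃ w ∈ B,
      p * #B ^ 2 ≤ #(B + ((x - y) / (z - w)) • B) * (p + #B ^ 2) ∨
      #B ^ 2 ≤ p ∧ #B ^ 3 ≤ 4 * #(B + B) * #(B + ((x - y) / (z - w)) • B) := by
  set R : Set (ZMod p) := {r | ∃ x ∈ B, ∃ y ∈ B, ∃ z ∈ B, ∃ w ∈ B, r = (x - y) / (z - w)} with hR
  by_cases hall : ∀ r ∈ R, r + 1 ∈ R
  · have hn : ∀ n : ℕ, (n : ZMod p) ∈ R := by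
      intro n
      induction n with
      | zero =>
        obtain ⟨b, hb⟩ := hB
        exact ⟨b, hb, b, hb, b, hb, b, hb, by simp⟩
      | succ n ih =>
        rw [Nat.cast_succ]
        exact hall _ ih
    obtain ⟨r, hr⟩ := exists_mul_sq_le_card_add_smul B
    have hrR : r ∈ R := by
      rw [← ZMod.natCast_zmod_val r]
      exact hn _
    obtain ⟨x, hx, y, hy, z, hz, w, hw, rfl⟩ := hrR
    rw [ZMod.card] at hr
    exact ⟨x, hx, y, hy, z, hz, w, hw, Or.inl hr⟩
  · push Not at hall
    obtain ⟨r, hrR, hr⟩ := hall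
    have hcard : ∀ Z ⊆ B, #(Z + (r + 1) • B) = #Z * #B := by
      intro Z hZ
      rw [← card_smul_finset₀ (a := r + 1) (s := B) ?_]
      · rw [card_add_iff]
        rintro ⟨u, v⟩ huv ⟨u', v'⟩ huv' h
        simp only [Set.mem_prod, mem_coe] at huv huv'
        obtain ⟨hu, hrv⟩ := huv
        obtain ⟨hu', hrv'⟩ := huv'
        obtain ⟨v, hv, rfl⟩ := mem_smul_finset.1 hrv
        obtain ⟨v', hv', rfl⟩ := mem_smul_finset.1 hrv'
        simp only [smul_eq_mul] at h ⊢
        by_cases hvv : v - v' = 0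
        · obtain rfl := sub_eq_zero.1 hvv
          rw [add_right_cancel h]
        · refine absurd ⟨u', hZ hu', u, hZ hu, v, hv, v', hv', ?_⟩ hr
          rw [eq_div_iff hvv]
          linear_combination h
      · rintro h
        obtain ⟨b, hb⟩ := hB
        exact hr ⟨b, hb, b, hb, b, hb, b, hb, by simp [h]⟩
    obtain ⟨Z, hZB, hZ0, hZ⟩ := exists_card_add_add_le hB B (r • B)
    obtain ⟨x, hx, y, hy, z, hz, w, hw, rfl⟩ := hrR
    refine ⟨x, hx, y, hy, z, hz, w, hw, Or.inr ⟨?_, ?_⟩⟩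
    · rw [sq, ← hcard B Subset.rfl]
      exact (card_le_univ _).trans (ZMod.card p).le
    · set r := (x - y) / (z - w)
      have h1 : Z + (r + 1) • B ⊆ Z + B + r • B := by
        rw [add_assoc]
        refine add_subset_add_left fun u hu ↦ ?_
        obtain ⟨b, hb, rfl⟩ := mem_smul_finset.1 hu
        exact mem_add.2 ⟨b, hb, r • b, smul_mem_smul_finset hb, by simp only [smul_eq_mul]; ring⟩
      have h2 := card_le_card h1
      rw [hcard Z hZB] at h2
      refine Nat.le_of_mul_le_mul_right ?_ hZ0.card_pos
      calc #B ^ 3 * #Z = #Z * #B * #B ^ 2 := by ring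
        _ ≤ #(Z + B + r • B) * #B ^ 2 := by gcongr
        _ ≤ _ := hZ

theorem card_add_self_mul_le {G : Type*} [AddCommGroup G] [DecidableEq G] (A B : Finset G) :
    #(B + B) * #A ≤ #(A + B) ^ 2 := by
  have h := ruzsa_triangle_inequality_add_add_add B A B
  rwa [add_comm B A, ← sq] at h

theorem card_two_nsmul_sub_two_nsmul_mul_le {G : Type*} [AddCommGroup G] [DecidableEq G]
    (A : Finset G) {B : Finset G} (hB : B.Nonempty) :
    #(2 • A - 2 • A) * #B ^ 3 ≤ #(A + B) ^ 4 := by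
  have h := pluennecke_ruzsa_inequality_nsmul_sub_nsmul_add hB A 2 2
  have hb : (0 : ℚ≥0) < #B := by exact_mod_cast hB.card_pos
  rw [add_comm B A] at h
  have h2 : (#(2 • A - 2 • A) : ℚ≥0) * #B ^ 3 ≤ #(A + B) ^ 4 := by
    calc _ ≤ ((#(A + B) / #B : ℚ≥0) ^ (2 + 2) * #B) * (#B : ℚ≥0) ^ 3 := by gcongr
      _ = (#(A + B) / #B * #B : ℚ≥0) ^ 4 := by ring
      _ = #(A + B) ^ 4 := by rw [div_mul_cancel₀ _ hb.ne']
  exact_mod_cast h2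

theorem alternative_of_card_bounds {a b p k N Q D G L M : ℝ} (ha : 0 < a) (hb : 0 < b) (hp : 0 < p)
    (hk : 0 < k) (hN : 0 ≤ N) (hQ : 0 ≤ Q) (hL : 0 ≤ L) (hM : 0 ≤ M) (hkb : k ≤ b)
    (hpb : p ≤ b ^ 2) (henergy : a ^ 2 * b ≤ 2 * (N * k) * L * M)
    (hcover : Q * N ^ 4 ≤ (M * L) ^ 4 * D) (hD : D * b ^ 3 ≤ M ^ 4) (hG : G * a ≤ M ^ 2)
    (hdich : p * k ^ 2 ≤ Q * (p + k ^ 2) ∨ k ^ 2 ≤ p ∧ k ^ 3 ≤ 4 * G * Q) :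
    b ^ 3 * p * a ^ 8 ≤ 32 * L ^ 8 * M ^ 12 ∨
      a ^ 9 * b ^ 7 ≤ 64 * L ^ 8 * M ^ 14 * Real.sqrt p := by
  have hkey : Q * (a ^ 8 * b ^ 7) ≤ 16 * L ^ 8 * M ^ 12 * k ^ 4 := by
    calc Q * (a ^ 8 * b ^ 7) = Q * (a ^ 2 * b) ^ 4 * b ^ 3 := by ring
      _ ≤ Q * (2 * (N * k) * L * M) ^ 4 * b ^ 3 := by gcongr
      _ = 16 * k ^ 4 * L ^ 4 * M ^ 4 * (Q * N ^ 4) * b ^ 3 := by ring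
      _ ≤ 16 * k ^ 4 * L ^ 4 * M ^ 4 * ((M * L) ^ 4 * D) * b ^ 3 := by gcongr
      _ = 16 * k ^ 4 * L ^ 8 * M ^ 8 * (D * b ^ 3) := by ring
      _ ≤ 16 * k ^ 4 * L ^ 8 * M ^ 8 * M ^ 4 := by gcongr
      _ = _ := by ring
  obtain h | ⟨h1, h2⟩ := hdich
  · left
    refine le_of_mul_le_mul_right (a := k ^ 2 * b ^ 4) ?_ (by positivity)
    calc b ^ 3 * p * a ^ 8 * (k ^ 2 * b ^ 4) = (p * k ^ 2) * (a ^ 8 * b ^ 7) := by ring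
      _ ≤ (Q * (p + k ^ 2)) * (a ^ 8 * b ^ 7) := by gcongr
      _ = (Q * (a ^ 8 * b ^ 7)) * (p + k ^ 2) := by ring
      _ ≤ (16 * L ^ 8 * M ^ 12 * k ^ 4) * (b ^ 2 + b ^ 2) := by gcongr
      _ = 32 * L ^ 8 * M ^ 12 * (k ^ 2 * (k ^ 2 * b ^ 2)) := by ring
      _ ≤ 32 * L ^ 8 * M ^ 12 * (k ^ 2 * (b ^ 2 * b ^ 2)) := by gcongr
      _ = _ := by ring
  · right
    have hkp : k ≤ Real.sqrt p := Real.le_sqrt_of_sq_le h1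
    refine le_of_mul_le_mul_right (a := k ^ 3) ?_ (by positivity)
    calc a ^ 9 * b ^ 7 * k ^ 3 = k ^ 3 * (a * (a ^ 8 * b ^ 7)) := by ring
      _ ≤ (4 * G * Q) * (a * (a ^ 8 * b ^ 7)) := by gcongr
      _ = 4 * (G * a) * (Q * (a ^ 8 * b ^ 7)) := by ring
      _ ≤ 4 * M ^ 2 * (16 * L ^ 8 * M ^ 12 * k ^ 4) := by gcongr
      _ = 64 * L ^ 8 * M ^ 14 * k * k ^ 3 := by ring
      _ ≤ _ := by gcongr

theorem exists_popular_dilates {F : Type*} [Field F] [DecidableEq F] {A B : Finset F}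
    (hA : A.Nonempty) (hB : B.Nonempty) (h0 : 0 ∉ B) :
    ∃ N : ℕ, 1 ≤ N ∧ ∃ b₀ : F, ∃ B₁ ⊆ B, B₁.Nonempty ∧ (∀ b ∈ B₁, N ≤ #(b • A ∩ b₀ • A)) ∧
      (#A : ℝ) ^ 2 * #B ≤ #(A * B) * (N * #B₁ * (1 + Real.log #A)) := by
  obtain ⟨b₀, -, hen⟩ := exists_sum_card_smul_inter_ge A hB h0
  obtain ⟨N, hN, hlev⟩ := exists_le_card_mul_level B (fun b ↦ #(b • A ∩ b₀ • A))
    (M := #A) hA.card_pos fun b _ ↦ (card_le_card inter_subset_left).trans card_smul_finset_le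
  have hen' : (#A : ℝ) ^ 2 * #B ≤ #(A * B) * ∑ b ∈ B, (#(b • A ∩ b₀ • A) : ℝ) := by
    exact_mod_cast hen
  have hmain := hen'.trans (mul_le_mul_of_nonneg_left hlev (Nat.cast_nonneg _))
  refine ⟨N, hN, b₀, {b ∈ B | N ≤ #(b • A ∩ b₀ • A)}, filter_subset _ _, ?_,
    fun b hb ↦ (mem_filter.1 hb).2, hmain⟩
  rw [nonempty_iff_ne_empty]
  intro h
  rw [h] at hmain
  have : 0 < (#A : ℝ) ^ 2 * #B :=
    mul_pos (pow_pos (Nat.cast_pos.2 hA.card_pos) 2) (Nat.cast_pos.2 hB.card_pos)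
  simp only [card_empty, Nat.cast_zero, mul_zero, zero_mul] at hmain
  exact this.not_ge hmain

theorem sum_product_alternative {p : ℕ} [Fact p.Prime] {A B : Finset (ZMod p)}
    (hb2 : 2 ≤ #B) (hBA : #B ≤ #A) (hpB : (p : ℝ) ≤ (#B : ℝ) ^ 2) {M L : ℝ}
    (hAM : #(A + B) ≤ M) (hMM : #(A * B) ≤ M) (hL : L = 1 + Real.log #A) :
    (#B : ℝ) ^ 3 * p * (#A : ℝ) ^ 8 ≤ 32 * L ^ 8 * M ^ 12 ∨
      (#A : ℝ) ^ 9 * (#B : ℝ) ^ 7 ≤ 64 * L ^ 8 * M ^ 14 * Real.sqrt p := by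
  have hA0 : A.Nonempty := card_pos.1 (by omega)
  have hB0 : B.Nonempty := card_pos.1 (by omega)
  have hM0 : 0 ≤ M := (Nat.cast_nonneg _).trans hAM
  have hL0 : 0 ≤ L := by
    have := Real.log_natCast_nonneg #A
    linarith
  have herase := pred_card_le_card_erase (s := B) (a := 0)
  have hcard : (#B : ℝ) ≤ 2 * #(B.erase 0) := by
    exact_mod_cast (by omega : #B ≤ 2 * #(B.erase 0))
  have hE0 : (B.erase 0).Nonempty := card_pos.1 (by omega)
  obtain ⟨N, hN, b₀, B₁, hB₁E, hB₁0, hinter, hen⟩ :=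
    exists_popular_dilates hA0 hE0 (notMem_erase 0 B)
  obtain ⟨x, hx, y, hy, z, hz, w, hw, hdich⟩ := quotient_set_dichotomy hB₁0
  have hB₁B : B₁ ⊆ B := hB₁E.trans (erase_subset _ _)
  have hQ := card_add_smul_div_mul_le hN hB₁0 hB₁E (notMem_erase 0 B) hinter hx hy hz hw
  have hAE : (#(A + B.erase 0) : ℝ) ≤ M :=
    (Nat.cast_le.2 (card_le_card (add_subset_add_left (erase_subset 0 B)))).trans hAM
  have hME : (#(A * B.erase 0) : ℝ) ≤ M :=
    (Nat.cast_le.2 (card_le_card (mul_subset_mul_left (erase_subset 0 B)))).trans hMM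
  have hkb : (#B₁ : ℝ) ≤ #B := Nat.cast_le.2 (card_le_card hB₁B)
  have hD : (#(2 • A - 2 • A) : ℝ) * #B ^ 3 ≤ #(A + B) ^ 4 := by
    exact_mod_cast card_two_nsmul_sub_two_nsmul_mul_le A hB0
  have hG : (#(B₁ + B₁) : ℝ) * #A ≤ #(A + B) ^ 2 := by
    have h1 : #(B₁ + B₁) * #A ≤ #(B + B) * #A := by gcongr
    exact_mod_cast h1.trans (card_add_self_mul_le A B)
  have hlog : 1 + Real.log #B₁ ≤ L := by
    rw [hL]
    have hk0 : (0 : ℝ) < #B₁ := Nat.cast_pos.2 hB₁0.card_pos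
    have := Real.log_le_log hk0 (hkb.trans (Nat.cast_le.2 hBA))
    linarith
  have hlog0 : 0 ≤ Real.log #B₁ := Real.log_natCast_nonneg _
  have hdich' : (p : ℝ) * #B₁ ^ 2 ≤ #(B₁ + ((x - y) / (z - w)) • B₁) * (p + #B₁ ^ 2) ∨
      (#B₁ : ℝ) ^ 2 ≤ p ∧
        (#B₁ : ℝ) ^ 3 ≤ 4 * #(B₁ + B₁) * #(B₁ + ((x - y) / (z - w)) • B₁) := by
    exact_mod_cast hdich
  refine alternative_of_card_bounds (Nat.cast_pos.2 hA0.card_pos) (Nat.cast_pos.2 hB0.card_pos)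
    (Nat.cast_pos.2 (Fact.out : p.Prime).pos) (Nat.cast_pos.2 hB₁0.card_pos) (Nat.cast_nonneg N)
    (Nat.cast_nonneg _) hL0 hM0 hkb hpB ?_ (hQ.trans ?_)
    (hD.trans (pow_le_pow_left₀ (Nat.cast_nonneg _) hAM 4))
    (hG.trans (pow_le_pow_left₀ (Nat.cast_nonneg _) hAM 2)) hdich'
  · rw [← hL] at hen
    calc (#A : ℝ) ^ 2 * #B ≤ #A ^ 2 * (2 * #(B.erase 0)) := by gcongr
      _ = 2 * ((#A : ℝ) ^ 2 * #(B.erase 0)) := by ring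
      _ ≤ 2 * (#(A * B.erase 0) * (N * #B₁ * L)) := by gcongr
      _ ≤ 2 * (M * (N * #B₁ * L)) := by gcongr
      _ = _ := by ring
  · refine mul_le_mul_of_nonneg_right ?_ (Nat.cast_nonneg _)
    gcongr

theorem rpow_one_div_le_mul_of_le_mul_pow {X C K : ℝ} {n : ℕ} (hn : n ≠ 0) (hX : 0 ≤ X)
    (hC : 1 ≤ C) (hK : 0 ≤ K) (h : X ≤ C * K ^ n) : X ^ ((1 : ℝ) / n) ≤ C * K := by
  rw [one_div, Real.rpow_inv_le_iff_of_pos hX (by positivity) (by positivity), Real.rpow_natCast,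
    mul_pow]
  refine h.trans ?_
  gcongr
  exact le_self_pow₀ hC hn

theorem different_sets_large :
    ∃ c α : ℝ, 0 < c ∧ 0 ≤ α ∧ ∀ (p : ℕ), p.Prime → ∀ A B : Finset (ZMod p),
      B.card ≤ A.card → Real.sqrt p ≤ (B.card : ℝ) →
      c * (Real.log (A.card : ℝ)) ^ (-α) *
          min (((B.card : ℝ) ^ 7 / ((A.card : ℝ) ^ 5 * Real.sqrt p)) ^ ((1 : ℝ) / 14))
              (((B.card : ℝ) ^ 3 * (p : ℝ) / (A.card : ℝ) ^ 4) ^ ((1 : ℝ) / 12)) ≤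
        max (((A + B).card : ℝ) / (A.card : ℝ)) (((A * B).card : ℝ) / (A.card : ℝ)) := by
  refine ⟨1 / (64 * 3 ^ 8), 8, by positivity, by norm_num, ?_⟩
  intro p hp A B hBA hpB
  have : Fact p.Prime := ⟨hp⟩
  have hp2 : (2 : ℝ) ≤ p := by exact_mod_cast hp.two_le
  have hsp : 0 < Real.sqrt p := Real.sqrt_pos.2 (by linarith)
  have hsq : Real.sqrt p ^ 2 = p := Real.sq_sqrt (by linarith)
  have hb2 : 2 ≤ #B := by
    by_contra! h
    have : (#B : ℝ) ≤ 1 := by exact_mod_cast Nat.le_of_lt_succ h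
    nlinarith
  have hpb : (p : ℝ) ≤ (#B : ℝ) ^ 2 := by rw [← hsq]; gcongr
  have halt := sum_product_alternative hb2 hBA hpb (M := (max #(A + B) #(A * B) : ℕ))
    (by exact_mod_cast le_max_left _ _) (by exact_mod_cast le_max_right _ _) rfl
  rw [max_div_div_right (Nat.cast_nonneg _), ← Nat.cast_max]
  have ha2 : (2 : ℝ) ≤ #A := by exact_mod_cast hb2.trans hBA
  generalize (#A : ℝ) = a at *
  generalize (#B : ℝ) = b at *
  generalize hM : ((max #(A + B) #(A * B) : ℕ) : ℝ) = M at *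
  have hb0 : 0 < b := hsp.trans_le hpB
  have ha0 : 0 < a := by linarith
  have hM0 : 0 ≤ M := hM ▸ Nat.cast_nonneg _
  have hloga : 0 < Real.log a := Real.log_pos (by linarith)
  set L := 1 + Real.log a with hL
  have hL1 : 1 ≤ L := by linarith
  have hL3 : L ≤ 3 * Real.log a := by
    have := Real.log_le_log (by norm_num) ha2
    have := Real.log_two_gt_d9
    linarith
  have hC : 1 ≤ 64 * L ^ 8 := by
    have := one_le_pow₀ hL1 (n := 8)
    linarith
  have hmin : min ((b ^ 7 / (a ^ 5 * Real.sqrt p)) ^ ((1 : ℝ) / 14))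
      ((b ^ 3 * p / a ^ 4) ^ ((1 : ℝ) / 12)) ≤ 64 * L ^ 8 * (M / a) := by
    obtain h | h := halt
    · refine (min_le_right _ _).trans ?_
      refine mod_cast rpow_one_div_le_mul_of_le_mul_pow (n := 12) (by norm_num) (by positivity) hC
        (by positivity) ?_
      rw [div_le_iff₀ (by positivity)]
      refine le_of_mul_le_mul_right (a := a ^ 8) ?_ (by positivity)
      calc b ^ 3 * p * a ^ 8 ≤ 32 * L ^ 8 * M ^ 12 := h
        _ ≤ 64 * L ^ 8 * M ^ 12 := by gcongr; norm_num
        _ = _ := by field_simp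
    · refine (min_le_left _ _).trans ?_
      refine mod_cast rpow_one_div_le_mul_of_le_mul_pow (n := 14) (by norm_num) (by positivity) hC
        (by positivity) ?_
      rw [div_le_iff₀ (by positivity)]
      refine le_of_mul_le_mul_right (a := a ^ 9) ?_ (by positivity)
      calc b ^ 7 * a ^ 9 = a ^ 9 * b ^ 7 := by ring
        _ ≤ 64 * L ^ 8 * M ^ 14 * Real.sqrt p := h
        _ = _ := by field_simp
  rw [Real.rpow_neg hloga.le, Real.rpow_ofNat]
  calc _ ≤ 1 / (64 * 3 ^ 8) * (Real.log a ^ 8)⁻¹ * (64 * L ^ 8 * (M / a)) := by gcongr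
    _ ≤ 1 / (64 * 3 ^ 8) * (Real.log a ^ 8)⁻¹ * (64 * (3 * Real.log a) ^ 8 * (M / a)) := by gcongr
    _ = M / a := by field_simp
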